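/- Let N be a positive integer and t > -log N a real number. The sequence η_n(t,N) = Σ_{k=N}^n (1/(t+log(k+1/2)) - 1/(H_k - γ + t)) for n ≥ N is positive, strictly increasing, and bounded above by (1/24)∫_N^∞ dx/(x^2(t+log x)^2); consequently its limit η(t,N) as n → ∞ exists and is positive. -/

import Mathlib

open Real Filter MeasureTheory Finset Topology

/-- The sequence `η_n(t,N) = Σ_{k=N}^n (1/(t+log(k+1/2)) - 1/(H_k - γ + t))`. -/
noncomputable def eta (N : ℕ) (t : ℝ) (n : ℕ) : ℝ :=
  ∑ k ∈ Finset.Icc N n,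
    (1 / (t + Real.log ((k : ℝ) + 1/2)) -
      1 / ((harmonic k : ℝ) - Real.eulerMascheroniConstant + t))

lemma aux_log_lower (x : ℝ) (h0 : 0 < x) (h1 : x < 1) :
    2 * x < log (1 + x) - log (1 - x) := by
  have h := Real.hasSum_log_sub_log_of_abs_lt_one (x := x) (by rw [abs_of_pos h0]; exact h1)
  have h2 := sum_le_hasSum (Finset.range 2) (fun i _ => by positivity) h
  simp [Finset.sum_range_succ] at h2
  have : 0 < x ^ 3 := by positivity
  norm_num at h2
  linarith

lemma aux_log_upper (x : ℝ) (h0 : 0 < x) (h1 : x < 1) :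
    log (1 + x) - log (1 - x) ≤ 2 * x + (2 / 3) * x ^ 3 / (1 - x ^ 2) := by
  have h := Real.hasSum_log_sub_log_of_abs_lt_one (x := x) (by rw [abs_of_pos h0]; exact h1)
  have hx2 : x ^ 2 < 1 := by nlinarith
  have g := ((hasSum_geometric_of_lt_one (sq_nonneg x) hx2).mul_left ((2 / 3) * x)).add
    (hasSum_ite_eq (0 : ℕ) ((4 / 3) * x))
  have key := hasSum_le (fun k => ?_) h g
  · refine key.trans (le_of_eq ?_)
    have : 1 - x ^ 2 ≠ 0 := by linarith
    field_simp
    ring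
  · rcases Nat.eq_zero_or_pos k with rfl | hk
    · simp; linarith
    · have hk' : (1 : ℝ) ≤ k := by exact_mod_cast hk
      simp only [hk.ne', if_false, add_zero]
      have e : (1 : ℝ) / (2 * k + 1) ≤ 1 / 3 := by
        apply one_div_le_one_div_of_le <;> linarith
      have e2 : x ^ (2 * k + 1) = x * (x ^ 2) ^ k := by rw [pow_succ, pow_mul]; ring
      rw [e2]
      have : 0 < x * (x ^ 2) ^ k := by positivity
      nlinarith

noncomputable def dl (k : ℕ) : ℝ :=
  (harmonic k : ℝ) - Real.eulerMascheroniConstant - Real.log ((k : ℝ) + 1/2)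

lemma dl_tendsto : Tendsto dl atTop (𝓝 0) := by
  have h1 := Real.tendsto_harmonic_sub_log
  have h2 := (Real.tendsto_log_comp_add_sub_log (1/2)).comp (tendsto_natCast_atTop_atTop (R := ℝ))
  have h3 := (h1.sub h2).sub_const Real.eulerMascheroniConstant
  simp only [sub_zero, sub_self] at h3
  refine h3.congr (fun k => ?_)
  simp only [dl, Function.comp]
  ring

lemma dl_diff (k : ℕ) :
    dl k - dl (k + 1) = log (1 + 1 / (2 * ((k : ℝ) + 1))) - log (1 - 1 / (2 * ((k : ℝ) + 1)))
      - 2 * (1 / (2 * ((k : ℝ) + 1))) := by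
  have hk : (0 : ℝ) ≤ k := k.cast_nonneg
  have e1 : 1 + 1 / (2 * ((k : ℝ) + 1)) = (((k + 1 : ℕ) : ℝ) + 1 / 2) / (k + 1) := by
    push_cast; field_simp; try ring
  have e2 : 1 - 1 / (2 * ((k : ℝ) + 1)) = ((k : ℝ) + 1 / 2) / (k + 1) := by
    field_simp; ring
  rw [e1, e2, log_div (by positivity) (by positivity), log_div (by positivity) (by positivity)]
  simp only [dl, harmonic_succ]
  push_cast
  field_simp
  ring

lemma u_bounds (k : ℕ) : 0 < 1 / (2 * ((k : ℝ) + 1)) ∧ 1 / (2 * ((k : ℝ) + 1)) < 1 := by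
  have hk : (0 : ℝ) ≤ k := k.cast_nonneg
  refine ⟨by positivity, ?_⟩
  rw [div_lt_one (by positivity)]; linarith

lemma dl_anti : StrictAnti dl := strictAnti_nat_of_succ_lt fun k => by
  have := dl_diff k
  have h := aux_log_lower _ (u_bounds k).1 (u_bounds k).2
  linarith

lemma dl_pos (k : ℕ) : 0 < dl k :=
  (dl_anti.antitone.le_of_tendsto dl_tendsto (k + 1)).trans_lt (dl_anti k.lt_succ_self)

lemma dl_le (k : ℕ) : dl k ≤ 1 / (24 * ((k : ℝ) + 1/2) ^ 2) := by
  have hm : Monotone (fun k : ℕ => dl k - 1 / (24 * ((k : ℝ) + 1/2) ^ 2)) := by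
    refine monotone_nat_of_le_succ fun k => ?_
    have h := aux_log_upper _ (u_bounds k).1 (u_bounds k).2
    have h2 := dl_diff k
    obtain ⟨h0, h1⟩ := u_bounds k
    have hk : (0 : ℝ) ≤ k := k.cast_nonneg
    have e : 1 / (24 * ((k : ℝ) + 1/2) ^ 2) - 1 / (24 * (((k + 1 : ℕ) : ℝ) + 1/2) ^ 2)
        = (2 / 3) * (1 / (2 * ((k : ℝ) + 1))) ^ 3 / (1 - (1 / (2 * ((k : ℝ) + 1))) ^ 2) ^ 2 := by
      have : 1 - (1 / (2 * ((k : ℝ) + 1))) ^ 2 = ((k : ℝ) + 1 / 2) * (k + 3 / 2) / (k + 1) ^ 2 := by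
        field_simp; ring
      rw [this]
      push_cast
      have : (k : ℝ) + 1 + 1 / 2 = k + 3 / 2 := by ring
      rw [this]
      field_simp
      ring
    generalize 1 / (2 * ((k : ℝ) + 1)) = u at *
    have hu : 0 < 1 - u ^ 2 := by nlinarith
    have : (2 / 3) * u ^ 3 / (1 - u ^ 2) ≤ (2 / 3) * u ^ 3 / (1 - u ^ 2) ^ 2 := by
      apply div_le_div_of_nonneg_left (by positivity) (by positivity)
      nlinarith [sq_nonneg u]
    linarith
  have ht : Tendsto (fun k : ℕ => dl k - 1 / (24 * ((k : ℝ) + 1/2) ^ 2)) atTop (𝓝 0) := by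
    have : Tendsto (fun k : ℕ => 1 / (24 * ((k : ℝ) + 1/2) ^ 2)) atTop (𝓝 0) := by
      refine tendsto_const_nhds.div_atTop ?_
      refine Tendsto.const_mul_atTop (by norm_num) ?_
      exact (tendsto_pow_atTop (two_ne_zero)).comp
        (tendsto_atTop_add_const_right _ _ tendsto_natCast_atTop_atTop)
    simpa using dl_tendsto.sub this
  have := hm.ge_of_tendsto ht k
  linarith

lemma f_mid (t m s : ℝ) (hs : |s| < m) (h1 : 0 < t + log (m + s)) (h2 : 0 < t + log (m - s)) :
    2 * (1 / (m ^ 2 * (t + log m) ^ 2)) ≤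
      1 / ((m + s) ^ 2 * (t + log (m + s)) ^ 2) + 1 / ((m - s) ^ 2 * (t + log (m - s)) ^ 2) := by
  obtain ⟨ha, hb⟩ := abs_lt.mp hs
  have hp : 0 < m + s := by linarith
  have hq : 0 < m - s := by linarith
  have hm : 0 < m := by linarith
  have hl : log (m + s) + log (m - s) ≤ 2 * log m := by
    rw [← log_mul hp.ne' hq.ne']
    have : 2 * log m = log (m ^ 2) := by rw [log_pow]; norm_num
    rw [this]
    apply log_le_log (by positivity); nlinarith [sq_nonneg s]
  have hab : (t + log (m + s)) * (t + log (m - s)) ≤ (t + log m) ^ 2 := by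
    nlinarith [sq_nonneg (log (m + s) - log (m - s))]
  have hpq : (m + s) * (m - s) ≤ m ^ 2 := by nlinarith [sq_nonneg s]
  have hP : ((m + s) * (m - s)) * ((t + log (m + s)) * (t + log (m - s))) ≤
      m ^ 2 * (t + log m) ^ 2 := mul_le_mul hpq hab (by positivity) (by positivity)
  have h3 : 1 / (m ^ 2 * (t + log m) ^ 2) ≤
      1 / (((m + s) * (m - s)) * ((t + log (m + s)) * (t + log (m - s)))) :=
    one_div_le_one_div_of_le (by positivity) hP
  have h4 := two_mul_le_add_sq (1 / ((m + s) * (t + log (m + s)))) (1 / ((m - s) * (t + log (m - s))))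
  have e1 : 1 / ((m + s) ^ 2 * (t + log (m + s)) ^ 2) = (1 / ((m + s) * (t + log (m + s)))) ^ 2 := by
    rw [div_pow, mul_pow, one_pow]
  have e2 : 1 / ((m - s) ^ 2 * (t + log (m - s)) ^ 2) = (1 / ((m - s) * (t + log (m - s)))) ^ 2 := by
    rw [div_pow, mul_pow, one_pow]
  have e3 : 1 / (((m + s) * (m - s)) * ((t + log (m + s)) * (t + log (m - s)))) =
      (1 / ((m + s) * (t + log (m + s)))) * (1 / ((m - s) * (t + log (m - s)))) := by
    field_simp
  rw [e1, e2]; rw [e3] at h3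
  linarith

noncomputable def ff (t x : ℝ) : ℝ := 1 / (x^2 * (t + Real.log x)^2)

lemma pos_of_ge {N : ℕ} (hN : 0 < N) {t : ℝ} (ht : -Real.log N < t) {x : ℝ} (hx : (N : ℝ) ≤ x) :
    0 < x ∧ 0 < t + log N ∧ t + log N ≤ t + log x := by
  have : (0 : ℝ) < N := by exact_mod_cast hN
  have h := log_le_log this hx
  exact ⟨by linarith, by linarith, by linarith⟩

lemma ff_cont {N : ℕ} (hN : 0 < N) {t : ℝ} (ht : -Real.log N < t) :
    ContinuousOn (ff t) (Set.Ici (N : ℝ)) := by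
  intro x hx
  obtain ⟨h1, h2, h3⟩ := pos_of_ge hN ht hx
  have h4 : 0 < t + log x := by linarith
  refine ContinuousAt.continuousWithinAt ?_
  unfold ff
  refine ContinuousAt.div continuousAt_const ?_ (by positivity)
  exact (continuousAt_id.pow 2).mul ((continuousAt_const.add (continuousAt_log h1.ne')).pow 2)

lemma ff_int {N : ℕ} (hN : 0 < N) {t : ℝ} (ht : -Real.log N < t) :
    IntegrableOn (ff t) (Set.Ioi (N : ℝ)) := by
  have hN' : (0 : ℝ) < N := by exact_mod_cast hN
  have h := (integrableOn_Ioi_rpow_of_lt (a := -2) (by norm_num) hN').const_mul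
    (1 / (t + log N) ^ 2)
  refine Integrable.mono' h
    (((ff_cont hN ht).mono Set.Ioi_subset_Ici_self).aestronglyMeasurable measurableSet_Ioi) ?_
  filter_upwards [ae_restrict_mem measurableSet_Ioi] with x hx
  obtain ⟨h1, h2, h3⟩ := pos_of_ge hN ht (le_of_lt hx)
  have h4 : 0 < t + log x := by linarith
  have e : x ^ (-2 : ℝ) = 1 / x ^ 2 := by
    rw [rpow_neg h1.le, one_div]; norm_num
  rw [e, div_mul_div_comm, one_mul]
  unfold ff
  rw [norm_of_nonneg (by positivity), mul_comm]
  apply one_div_le_one_div_of_le (by positivity)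
  gcongr

lemma ff_step {N : ℕ} (hN : 0 < N) {t : ℝ} (ht : -Real.log N < t) (k : ℕ) (hk : N ≤ k) :
    ff t ((k : ℝ) + 1/2) ≤ ∫ x in (k : ℝ)..(k + 1 : ℕ), ff t x := by
  have hk' : (N : ℝ) ≤ k := by exact_mod_cast hk
  have hN' : (1 : ℝ) ≤ N := by exact_mod_cast hN
  have hle : (k : ℝ) ≤ (k + 1 : ℕ) := by push_cast; linarith
  have hc : ContinuousOn (ff t) (Set.uIcc (k : ℝ) (k + 1 : ℕ)) := by
    rw [Set.uIcc_of_le hle]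
    exact (ff_cont hN ht).mono fun x hx => hk'.trans hx.1
  have hi := hc.intervalIntegrable (μ := volume)
  have hr : ∫ x in (k : ℝ)..(k + 1 : ℕ), ff t ((2 * k + 1) - x) = ∫ x in (k : ℝ)..(k + 1 : ℕ), ff t x := by
    rw [intervalIntegral.integral_comp_sub_left (ff t) (2 * (k : ℝ) + 1)]
    congr 1 <;> push_cast <;> ring
  have hi2 : IntervalIntegrable (fun x => ff t ((2 * k + 1) - x)) volume (k : ℝ) (k + 1 : ℕ) := by
    apply ContinuousOn.intervalIntegrable
    refine hc.comp (by fun_prop) ?_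
    rw [Set.uIcc_of_le hle]
    intro x hx
    have := hx.1
    have h2 := hx.2
    push_cast at h2
    constructor
    · linarith
    · push_cast; linarith
  have key : ∫ x in (k : ℝ)..(k + 1 : ℕ), (2 * ff t ((k : ℝ) + 1/2)) ≤
      ∫ x in (k : ℝ)..(k + 1 : ℕ), (ff t x + ff t ((2 * k + 1) - x)) := by
    apply intervalIntegral.integral_mono_on hle (by simp) (hi.add hi2)
    intro x hx
    have h1 := hx.1
    have h2 := hx.2
    push_cast at h2
    have e1 : (k : ℝ) + 1/2 + (x - (k + 1/2)) = x := by ring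
    have e2 : (k : ℝ) + 1/2 - (x - (k + 1/2)) = 2 * k + 1 - x := by ring
    have := f_mid t ((k : ℝ) + 1/2) (x - (k + 1/2)) (by rw [abs_lt]; constructor <;> linarith)
      (by rw [e1]; have := pos_of_ge hN ht (x := x) (by linarith); linarith)
      (by rw [e2]; have := pos_of_ge hN ht (x := 2 * k + 1 - x) (by linarith); linarith)
    rw [e1, e2] at this
    exact this
  rw [intervalIntegral.integral_add hi hi2, hr, intervalIntegral.integral_const] at key
  push_cast at key ⊢
  simp only [smul_eq_mul] at key
  linarith

lemma ff_sum {N : ℕ} (hN : 0 < N) {t : ℝ} (ht : -Real.log N < t) (n : ℕ) (hn : N ≤ n) :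
    ∑ k ∈ Finset.Icc N n, ff t ((k : ℝ) + 1/2) ≤ ∫ x in Set.Ioi (N : ℝ), ff t x := by
  have hint : ∀ k, N ≤ k → IntervalIntegrable (ff t) volume (N : ℝ) (k : ℕ) := fun k hk => by
    have hk' : (N : ℝ) ≤ k := by exact_mod_cast hk
    rw [intervalIntegrable_iff_integrableOn_Ioc_of_le hk']
    exact (ff_int hN ht).mono_set Set.Ioc_subset_Ioi_self
  have h1 : ∑ k ∈ Finset.Icc N n, ff t ((k : ℝ) + 1/2) ≤ ∫ x in (N : ℝ)..(n + 1 : ℕ), ff t x := by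
    induction n, hn using Nat.le_induction with
    | base => simpa using ff_step hN ht N le_rfl
    | succ n hn ih =>
      rw [Finset.sum_Icc_succ_top (by omega)]
      have h2 := ff_step hN ht (n + 1) (by omega)
      have h3 := intervalIntegral.integral_add_adjacent_intervals (hint (n + 1) (by omega))
        ((hint (n + 1) (by omega)).symm.trans (hint (n + 1 + 1) (by omega)))
      linarith
  refine h1.trans ?_
  rw [intervalIntegral.integral_of_le (by exact_mod_cast (by omega : N ≤ n + 1))]
  refine setIntegral_mono_set (ff_int hN ht) ?_ (Set.Ioc_subset_Ioi_self.eventuallyLE)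
  exact ae_of_all _ fun x => by simp only [ff, Pi.zero_apply]; positivity

lemma term_bounds {N : ℕ} (hN : 0 < N) {t : ℝ} (ht : -Real.log N < t) (k : ℕ) (hk : N ≤ k) :
    0 < (1 / (t + Real.log ((k : ℝ) + 1/2)) -
      1 / ((harmonic k : ℝ) - Real.eulerMascheroniConstant + t)) ∧
    (1 / (t + Real.log ((k : ℝ) + 1/2)) -
      1 / ((harmonic k : ℝ) - Real.eulerMascheroniConstant + t)) ≤
      (1/24) * ff t ((k : ℝ) + 1/2) := by
  have hk' : (N : ℝ) ≤ k := by exact_mod_cast hk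
  obtain ⟨h1, h2, h3⟩ := pos_of_ge hN ht (x := (k : ℝ) + 1/2) (by linarith)
  have hb : (harmonic k : ℝ) - Real.eulerMascheroniConstant + t =
      t + Real.log ((k : ℝ) + 1/2) + dl k := by simp only [dl]; ring
  have ha : 0 < t + Real.log ((k : ℝ) + 1/2) := by linarith
  have hd := dl_pos k
  have hd2 := dl_le k
  rw [hb]
  unfold ff
  generalize t + Real.log ((k : ℝ) + 1/2) = a at *
  generalize dl k = d at *
  have e : 1 / a - 1 / (a + d) = d / (a * (a + d)) := by field_simp; ring
  rw [e]
  refine ⟨by positivity, ?_⟩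
  calc d / (a * (a + d)) ≤ d / (a ^ 2) := by
        apply div_le_div_of_nonneg_left hd.le (by positivity); nlinarith
    _ ≤ (1 / (24 * ((k : ℝ) + 1/2) ^ 2)) / a ^ 2 := by gcongr
    _ = _ := by field_simp

theorem stmt_8 (N : ℕ) (hN : 0 < N) (t : ℝ) (ht : -Real.log N < t) :
    (∀ n : ℕ, N ≤ n → 0 < eta N t n) ∧
    (∀ n : ℕ, N ≤ n → eta N t n < eta N t (n + 1)) ∧
    (∀ n : ℕ, N ≤ n →
      eta N t n ≤ (1/24) * ∫ x in Set.Ioi (N : ℝ), 1 / (x^2 * (t + Real.log x)^2)) ∧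
    ∃ L : ℝ, 0 < L ∧ Filter.Tendsto (eta N t) Filter.atTop (𝓝 L) := by
  have A : ∀ n : ℕ, N ≤ n → 0 < eta N t n := fun n hn =>
    Finset.sum_pos (fun k hk => (term_bounds hN ht k (Finset.mem_Icc.mp hk).1).1)
      ⟨N, Finset.mem_Icc.mpr ⟨le_rfl, hn⟩⟩
  have B : ∀ n : ℕ, N ≤ n → eta N t n < eta N t (n + 1) := fun n hn => by
    unfold eta
    rw [Finset.sum_Icc_succ_top (by omega)]
    have := (term_bounds hN ht (n + 1) (by omega)).1
    linarith
  have C : ∀ n : ℕ, N ≤ n →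
      eta N t n ≤ (1/24) * ∫ x in Set.Ioi (N : ℝ), 1 / (x^2 * (t + Real.log x)^2) := fun n hn => by
    have h1 := ff_sum hN ht n hn
    have h2 : eta N t n ≤ ∑ k ∈ Finset.Icc N n, (1/24) * ff t ((k : ℝ) + 1/2) :=
      Finset.sum_le_sum fun k hk => (term_bounds hN ht k (Finset.mem_Icc.mp hk).1).2
    rw [← Finset.mul_sum] at h2
    simp only [ff] at h1 h2 ⊢
    linarith
  refine ⟨A, B, C, ?_⟩
  have hm : Monotone (fun n => eta N t (n + N)) := monotone_nat_of_le_succ fun n => by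
    have := (B (n + N) (by omega)).le
    rwa [show n + N + 1 = n + 1 + N by ring] at this
  have hbd : BddAbove (Set.range (fun n => eta N t (n + N))) :=
    ⟨_, by rintro _ ⟨n, rfl⟩; exact C (n + N) (by omega)⟩
  refine ⟨_, ?_, (tendsto_add_atTop_iff_nat N).mp (tendsto_atTop_ciSup hm hbd)⟩
  exact (A (0 + N) (by omega)).trans_le (le_ciSup hbd 0)
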